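/- Fix n ≥ 2, an integer k ≥ 1, a permutation σ of [n], and s ∈ [0,1]. Let n_m denote the number of m-cycles of σ. Then the generating function of orbit pseudoforests satisfies: ∑_{H ∈ H_k(σ)} s^{2·e(H)} ≤ ∏_{m=1}^{k} (1 + s^m·n_m·1{m even} + 2·s^{2m}·∑_{ℓ=1}^{m} ℓ·n_ℓ + s^{4m}·m·n_{2m}·1{2m ≤ k})^{n_m}. -/

import Mathlib

/-!
Contract every cycle of `σ` to a point. An edge orbit then joins two (possibly equal) cycles. It is
either a *half orbit*, consisting of the `m / 2` diameters of a cycle of even length `m`, or its size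
is divisible by the lengths of both cycles it joins (`dvd_of_not_isHalf`). Each even cycle carries
exactly one half orbit, and every other cycle carries none.

Let `H` be an orbit pseudoforest. In any union of cycles closed under the joins of `H`, the number
of edges of `H` is at most the total length of the cycles. Take a connected family of cycles and
root it at a shortest cycle `r`. A shortest-path tree gives every cycle `A ≠ r` a parent orbit, of
size a positive multiple of `len A`. By the edge bound, the excess of these sizes over the lengths,
the sizes of the remaining orbits and the sizes of the half orbits add up to at most `len r`. So one
of the following holds:
* all parent orbits have size `len A` and no other orbit remains;
* exactly one parent orbit has size `2 * len A`, with `len A = len r`, and there is neither another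
  orbit nor a half orbit;
* one surplus orbit, of size `len r`, remains; re-rooting at one of its ends, and assigning it to
  that end, makes every orbit as long as the cycle it is assigned to.
Hence the non-half orbits of `H` are assigned injectively to cycles they touch, each of size `len A`
or, in the exceptional case, `2 * len A` (`assign_component`, `exists_assignment`).

Consequently `H` is the disjoint union of pieces `φ A`, one for each cycle `A`, where `φ A` is empty,
or the half orbit of `A`, or an orbit of size `len A` to a cycle no longer than `A`, with or without
the half orbit, or an orbit of size `2 * len A` to a cycle of twice the length (`exists_code`).
Counting these possibilities (`sum_choices_le`) bounds the generating function by a product over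
the cycles, and grouping cycles by length gives the result.
-/

open Filter
open scoped Classical

noncomputable section

/-- The set of potential edges on `n` vertices: unordered pairs of distinct elements of `Fin n`. -/
abbrev Edge (n : ℕ) := {e : Sym2 (Fin n) // ¬ e.IsDiag}

/-- The edge permutation `σ^E` induced by a node permutation `σ`:
`σ^E({i,j}) = {σ(i), σ(j)}`. -/
def edgePerm {n : ℕ} (σ : Equiv.Perm (Fin n)) : Equiv.Perm (Edge n) where
  toFun e := ⟨Sym2.map σ e.1, fun h => e.2 ((Sym2.isDiag_map σ.injective).mp h)⟩
  invFun e := ⟨Sym2.map σ.symm e.1, fun h => e.2 ((Sym2.isDiag_map σ.symm.injective).mp h)⟩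
  left_inv e := by
    ext : 1
    simp [Sym2.map_map, Function.comp_def]
  right_inv e := by
    ext : 1
    simp [Sym2.map_map, Function.comp_def]

/-- The size of the node orbit of `i` under `σ` (the length of the cycle of `σ` containing `i`). -/
def nodeOrbitSize {n : ℕ} (σ : Equiv.Perm (Fin n)) (i : Fin n) : ℕ :=
  (Finset.univ.filter fun j => σ.SameCycle i j).card

/-- The edge orbit of an edge `e` under the edge permutation induced by `σ`. -/
def edgeOrbit {n : ℕ} (σ : Equiv.Perm (Fin n)) (e : Edge n) : Finset (Edge n) :=
  Finset.univ.filter fun f => (edgePerm σ).SameCycle e f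

/-- The collection of all edge orbits of the edge permutation induced by `σ`. -/
def edgeOrbits {n : ℕ} (σ : Equiv.Perm (Fin n)) : Finset (Finset (Edge n)) :=
  Finset.univ.image fun e => edgeOrbit σ e

/-- Membership of the edge orbit of `e = {i,j}` in `O_k`: both node orbits `O_i`, `O_j` have
length at most `k` and the edge orbit `O_{ij}` has length at most `k`. -/
def memOk {n : ℕ} (σ : Equiv.Perm (Fin n)) (k : ℕ) (e : Edge n) : Prop :=
  (∀ i ∈ e.1, nodeOrbitSize σ i ≤ k) ∧ (edgeOrbit σ e).card ≤ k

/-- The number of `j`-cycles in the cycle decomposition of a permutation `σ` of `Fin n`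
(for `j = 1`, the number of fixed points). -/
def cycleCount {n : ℕ} (σ : Equiv.Perm (Fin n)) (j : ℕ) : ℕ :=
  if j = 1 then (Finset.univ.filter fun x => σ x = x).card
  else σ.cycleType.count j

/-- The simple graph on `Fin n` with edge set (the image of) `H`. -/
def edgeGraph {n : ℕ} (H : Finset (Edge n)) : SimpleGraph (Fin n) :=
  SimpleGraph.fromEdgeSet (Subtype.val '' (H : Set (Edge n)))

/-- `H` (viewed as a simple graph on `[n]`) is a pseudoforest: every connected component has at
most as many edges as vertices (equivalently, each component contains at most one cycle). -/
def IsPseudoforest {n : ℕ} (H : Finset (Edge n)) : Prop :=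
  ∀ c : (edgeGraph H).ConnectedComponent,
    (H.filter fun e => ∀ v ∈ e.1, (edgeGraph H).connectedComponentMk v = c).card ≤
      (Finset.univ.filter fun v => (edgeGraph H).connectedComponentMk v = c).card

/-- The family `H_k(σ)` of orbit pseudoforests: simple graphs on `[n]` whose edge set is a
(possibly empty) disjoint union of edge orbits all belonging to `O_k`, and which are
pseudoforests. -/
def orbitPseudoforests {n : ℕ} (σ : Equiv.Perm (Fin n)) (k : ℕ) : Finset (Finset (Edge n)) :=
  Finset.univ.filter fun H =>
    (∀ e ∈ H, edgeOrbit σ e ⊆ H ∧ memOk σ k e) ∧ IsPseudoforest H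

/-! ### Assigning edges of a weighted multigraph to vertices -/

/-- The simple graph on `V` underlying the multigraph with edges `F` and end map `ends`: loops and
multiplicities are forgotten. -/
def joinGraph {V E : Type*} (ends : E → Sym2 V) (F : Set E) : SimpleGraph V where
  Adj u v := u ≠ v ∧ ∃ e ∈ F, ends e = s(u, v)
  symm := ⟨by
    rintro u v ⟨h, e, he, h'⟩
    exact ⟨h.symm, e, he, by rw [h', Sym2.eq_swap]⟩⟩
  loopless := ⟨fun u h => h.1 rfl⟩

/-- Shortest-path tree: every `v ≠ r` in the component of `r` has a parent edge `p v ∈ F` from `v` to a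
vertex nearer to `r`, as measured by `d`. -/
lemma exists_parent {V E : Type*} [Nonempty E] (ends : E → Sym2 V) (F : Set E) (r : V) :
    ∃ (p : V → E) (d : V → ℕ), ∀ v, (joinGraph ends F).Reachable v r → v ≠ r →
      p v ∈ F ∧ ∃ u, ends (p v) = s(v, u) ∧ (joinGraph ends F).Reachable u r ∧ d u < d v := by
  have key : ∀ v, ∃ e, (joinGraph ends F).Reachable v r → v ≠ r →
      e ∈ F ∧ ∃ u, ends e = s(v, u) ∧ (joinGraph ends F).Reachable u r ∧
        (joinGraph ends F).dist u r < (joinGraph ends F).dist v r := by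
    intro v
    by_cases h : (joinGraph ends F).Reachable v r ∧ v ≠ r
    · obtain ⟨hv, hne⟩ := h
      obtain ⟨W, hW⟩ := hv.exists_walk_length_eq_dist
      cases W with
      | nil => exact absurd rfl hne
      | cons hadj W' =>
        rw [SimpleGraph.Walk.length_cons] at hW
        obtain ⟨_, e, he, hends⟩ := hadj
        refine ⟨e, fun _ _ => ⟨he, _, hends, W'.reachable, ?_⟩⟩
        have := SimpleGraph.dist_le W'
        omega
    · exact ⟨Classical.arbitrary E, fun h1 h2 => absurd ⟨h1, h2⟩ h⟩
  choose p hp using key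
  exact ⟨p, _, hp⟩

/-- Distinct vertices have distinct parent edges: a shared one would make each end nearer than the
other. -/
lemma parent_injOn {V E : Type*} {ends : E → Sym2 V} {p : V → E} {d : V → ℕ} {S : Set V}
    (h : ∀ v ∈ S, ∃ u, ends (p v) = s(v, u) ∧ d u < d v) : Set.InjOn p S := by
  intro v hv v' hv' hpp
  obtain ⟨u, hu, hd⟩ := h v hv
  obtain ⟨u', hu', hd'⟩ := h v' hv'
  rw [hpp, hu', Sym2.eq_iff] at hu
  rcases hu with ⟨h1, _⟩ | ⟨h1, h2⟩
  · exact h1.symm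
  · subst h1 h2; omega

/-- The edge `e`, of weight `w e`, may be assigned to its end `v`: either `w e = len v`, or
`w e = 2 * len v` where `v` carries no extra weight `h v` and is a shortest end of `e`. -/
def GoodFor {V E : Type*} (ends : E → Sym2 V) (len h : V → ℕ) (w : E → ℕ) (v : V) (e : E) : Prop :=
  v ∈ ends e ∧ (w e = len v ∨ (w e = 2 * len v ∧ h v = 0 ∧ ∀ u ∈ ends e, len v ≤ len u))

/-- In a connected closed set `U` whose total edge weight plus `∑ h` is at most `∑ len`, every edge is
assigned to one of its ends. The assignment is given by a map `q` from vertices to edges, so distinct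
edges go to distinct vertices. -/
lemma assign_component {V E : Type*} [Fintype V] [Fintype E] [Nonempty E] (ends : E → Sym2 V)
    (len h : V → ℕ) (w : E → ℕ) (hw : ∀ e, 0 < w e)
    (hdvd : ∀ e, ∀ v ∈ ends e, len v ∣ w e)
    (U : Finset V) (hne : U.Nonempty)
    (hclosed : ∀ e, ∀ u ∈ ends e, ∀ v ∈ ends e, u ∈ U → v ∈ U)
    (hconn : ∀ u ∈ U, ∀ v ∈ U, (joinGraph ends Set.univ).Reachable u v)
    (hcond : ∑ e with (∃ v ∈ ends e, v ∈ U), w e + ∑ v ∈ U, h v ≤ ∑ v ∈ U, len v) :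
    ∃ q : V → E, ∀ e, (∃ v ∈ ends e, v ∈ U) → ∃ v ∈ U, q v = e ∧ GoodFor ends len h w v e := by
  obtain ⟨r, hrU, hmin⟩ := Finset.exists_min_image U len hne
  obtain ⟨p, d, hp⟩ := exists_parent ends Set.univ r
  set Ec := Finset.univ.filter (fun e => ∃ v ∈ ends e, v ∈ U) with hEc
  have hpar : ∀ v ∈ U.erase r, ∃ u, ends (p v) = s(v, u) ∧ d u < d v := by
    intro v hv
    obtain ⟨hvr, hvU⟩ := Finset.mem_erase.mp hv
    obtain ⟨_, u, hu, _, hd⟩ := hp v (hconn v hvU r hrU) hvr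
    exact ⟨u, hu, hd⟩
  have hinj : Set.InjOn p (U.erase r : Finset V) := parent_injOn (ends := ends) (d := d) hpar
  set P := (U.erase r).image p with hP
  have hPsub : P ⊆ Ec := by
    intro e he
    obtain ⟨v, hv, rfl⟩ := Finset.mem_image.mp he
    obtain ⟨u, hu, _⟩ := hpar v hv
    simp only [hEc, Finset.mem_filter, Finset.mem_univ, true_and]
    exact ⟨v, by rw [hu]; simp, Finset.mem_of_mem_erase hv⟩
  have hmem : ∀ v ∈ U.erase r, v ∈ ends (p v) := by
    intro v hv
    obtain ⟨u, hu, _⟩ := hpar v hv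
    rw [hu]; simp
  have hge : ∀ v ∈ U.erase r, len v ≤ w (p v) := fun v hv =>
    Nat.le_of_dvd (hw _) (hdvd _ _ (hmem v hv))
  have hsum1 : ∑ e ∈ Ec \ P, w e + ∑ v ∈ U.erase r, w (p v) = ∑ e ∈ Ec, w e := by
    rw [← Finset.sum_sdiff hPsub, hP, Finset.sum_image hinj]
  have hsum2 : ∑ v ∈ U.erase r, len v + len r = ∑ v ∈ U, len v := Finset.sum_erase_add _ _ hrU
  have hsum3 : ∑ v ∈ U.erase r, w (p v) =
      ∑ v ∈ U.erase r, len v + ∑ v ∈ U.erase r, (w (p v) - len v) := by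
    rw [← Finset.sum_add_distrib]
    exact Finset.sum_congr rfl fun v hv => by have := hge v hv; omega
  have hmain : ∑ v ∈ U.erase r, (w (p v) - len v) + ∑ e ∈ Ec \ P, w e + ∑ v ∈ U, h v ≤ len r := by
    omega
  have hEcw : ∀ e ∈ Ec, len r ≤ w e := by
    intro e he
    simp only [hEc, Finset.mem_filter, Finset.mem_univ, true_and] at he
    obtain ⟨v, hv, hvU⟩ := he
    exact (hmin v hvU).trans (Nat.le_of_dvd (hw e) (hdvd e v hv))
  -- An excess is a positive multiple of some `len v ≥ len r`, so it uses up the whole bound.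
  by_cases hB : ∃ v ∈ U.erase r, w (p v) ≠ len v
  · obtain ⟨v, hv, hwv⟩ := hB
    have hvU := Finset.mem_of_mem_erase hv
    have hlenv := hmin v hvU
    have h2 : 2 * len v ≤ w (p v) := by
      obtain ⟨t, ht⟩ := hdvd _ _ (hmem v hv)
      have h0 := hw (p v)
      rcases t with _ | _ | t
      · omega
      · simp at ht; omega
      · rw [ht]; nlinarith
    have hs := Finset.add_sum_erase (U.erase r) (fun v => w (p v) - len v) hv
    have h3 : ∑ e ∈ Ec \ P, w e = 0 := by omega
    have h4 : ∑ v ∈ U, h v = 0 := by omega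
    have h5 : ∑ x ∈ (U.erase r).erase v, (w (p x) - len x) = 0 := by omega
    have h6 : w (p v) = 2 * len v := by omega
    have h7 : len v = len r := by omega
    refine ⟨p, fun e he => ?_⟩
    have heP : e ∈ P := by
      by_contra hcon
      have : e ∈ Ec \ P := Finset.mem_sdiff.mpr ⟨by simpa [hEc] using he, hcon⟩
      have := (Finset.sum_eq_zero_iff.mp h3) e this
      have := hw e
      omega
    obtain ⟨x, hx, rfl⟩ := Finset.mem_image.mp heP
    refine ⟨x, Finset.mem_of_mem_erase hx, rfl, hmem x hx, ?_⟩
    by_cases hxv : x = v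
    · subst hxv
      refine Or.inr ⟨h6, (Finset.sum_eq_zero_iff.mp h4) x hvU, fun u hu => ?_⟩
      rw [h7]
      exact hmin u (hclosed _ x (hmem x hx) u hu hvU)
    · left
      have := (Finset.sum_eq_zero_iff.mp h5) x (Finset.mem_erase.mpr ⟨hxv, hx⟩)
      have := hge x hx
      omega
  · push Not at hB
    by_cases hE : Ec \ P = ∅
    · refine ⟨p, fun e he => ?_⟩
      have heP : e ∈ P := by
        by_contra hcon
        have : e ∈ Ec \ P := Finset.mem_sdiff.mpr ⟨by simpa [hEc] using he, hcon⟩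
        simp [hE] at this
      obtain ⟨x, hx, rfl⟩ := Finset.mem_image.mp heP
      exact ⟨x, Finset.mem_of_mem_erase hx, rfl, hmem x hx, Or.inl (hB x hx)⟩
    · -- A surplus edge `e₀` remains; it weighs `len r` and is the only one.
      obtain ⟨e₀, he₀⟩ := Finset.nonempty_iff_ne_empty.mpr hE
      have he₀c := (Finset.mem_sdiff.mp he₀).1
      have hs := Finset.add_sum_erase (Ec \ P) w he₀
      have hle := hEcw e₀ he₀c
      have hw₀ : w e₀ = len r := by omega
      have hrest : ∑ e ∈ (Ec \ P).erase e₀, w e = 0 := by omega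
      have hcov : ∀ e ∈ Ec, e ≠ e₀ → e ∈ P := by
        intro e he hne'
        by_contra hcon
        have := (Finset.sum_eq_zero_iff.mp hrest) e
          (Finset.mem_erase.mpr ⟨hne', Finset.mem_sdiff.mpr ⟨he, hcon⟩⟩)
        have := hw e
        omega
      obtain ⟨x, hx, hxU⟩ : ∃ v ∈ ends e₀, v ∈ U := by simpa [hEc] using he₀c
      have hlx : len x = len r := by
        have h1 := Nat.le_of_dvd (hw e₀) (hdvd e₀ x hx)
        have h2 := hmin x hxU
        omega
      -- The tree avoids `e₀`, so `U` stays connected without it and can be re-rooted at `x`.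
      have hreach : ∀ N, ∀ v ∈ U, d v ≤ N → (joinGraph ends {e₀}ᶜ).Reachable v r := by
        intro N
        induction N with
        | zero =>
          intro v hv hd
          by_cases hvr : v = r
          · rw [hvr]
          · obtain ⟨u, hu, hlt⟩ := hpar v (Finset.mem_erase.mpr ⟨hvr, hv⟩)
            omega
        | succ N ih =>
          intro v hv hd
          by_cases hvr : v = r
          · rw [hvr]
          · have hv' := Finset.mem_erase.mpr ⟨hvr, hv⟩
            obtain ⟨u, hu, hlt⟩ := hpar v hv'
            have huU : u ∈ U := hclosed (p v) v (hmem v hv') u (by rw [hu]; simp) hv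
            have hadj : (joinGraph ends {e₀}ᶜ).Adj v u := by
              refine ⟨fun h => by subst h; omega, p v, ?_, hu⟩
              intro h
              rw [Set.mem_singleton_iff] at h
              exact (Finset.mem_sdiff.mp he₀).2 (h ▸ Finset.mem_image_of_mem p hv')
            exact hadj.reachable.trans (ih u huU (by omega))
      obtain ⟨p', d', hp'⟩ := exists_parent ends {e₀}ᶜ x
      have hpar' : ∀ v ∈ U.erase x, p' v ≠ e₀ ∧ ∃ u, ends (p' v) = s(v, u) ∧ d' u < d' v := by
        intro v hv
        obtain ⟨hvr, hvU⟩ := Finset.mem_erase.mp hv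
        obtain ⟨h1, u, hu, _, hd⟩ :=
          hp' v ((hreach _ v hvU le_rfl).trans (hreach _ x hxU le_rfl).symm) hvr
        exact ⟨h1, u, hu, hd⟩
      have hinj' : Set.InjOn p' (U.erase x : Finset V) :=
        parent_injOn (ends := ends) (d := d') fun v hv => (hpar' v hv).2
      have hmem' : ∀ v ∈ U.erase x, v ∈ ends (p' v) := by
        intro v hv
        obtain ⟨_, u, hu, _⟩ := hpar' v hv
        rw [hu]; simp
      have hsub' : (U.erase x).image p' ⊆ Ec.erase e₀ := by
        intro e he
        obtain ⟨v, hv, rfl⟩ := Finset.mem_image.mp he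
        refine Finset.mem_erase.mpr ⟨(hpar' v hv).1, ?_⟩
        simp only [hEc, Finset.mem_filter, Finset.mem_univ, true_and]
        exact ⟨v, hmem' v hv, Finset.mem_of_mem_erase hv⟩
      have hcard : (Ec.erase e₀).card ≤ ((U.erase x).image p').card := by
        rw [Finset.card_image_of_injOn hinj', Finset.card_erase_of_mem hxU,
          ← Finset.card_erase_of_mem hrU, ← Finset.card_image_of_injOn hinj]
        exact Finset.card_le_card fun e he =>
          hcov e (Finset.mem_of_mem_erase he) (Finset.ne_of_mem_erase he)
      have himg := Finset.eq_of_subset_of_card_le hsub' hcard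
      have hge' : ∀ v ∈ U.erase x, len v ≤ w (p' v) := fun v hv =>
        Nat.le_of_dvd (hw _) (hdvd _ _ (hmem' v hv))
      -- Total weight forces every new parent edge to weigh exactly the length of its child.
      have hA := Finset.sum_erase_add Ec w he₀c
      have hB' := Finset.sum_erase_add U len hxU
      rw [← himg, Finset.sum_image hinj'] at hA
      have heq := (Finset.sum_eq_sum_iff_of_le hge').mp
        (le_antisymm (Finset.sum_le_sum hge') (by omega))
      refine ⟨Function.update p' x e₀, fun e he => ?_⟩
      by_cases hee : e = e₀
      · subst hee
        exact ⟨x, hxU, by simp, hx, Or.inl (by omega)⟩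
      · have : e ∈ (U.erase x).image p' := by
          rw [himg]
          exact Finset.mem_erase.mpr ⟨hee, by simpa [hEc] using he⟩
        obtain ⟨v, hv, rfl⟩ := Finset.mem_image.mp this
        exact ⟨v, Finset.mem_of_mem_erase hv,
          Function.update_of_ne (Finset.ne_of_mem_erase hv) _ _, hmem' v hv,
          Or.inl (heq v hv).symm⟩

/-- Global form of `assign_component`: the assignments of the components fit together, and the result
is injective as a map from edges to vertices. -/
lemma exists_assignment {V E : Type*} [Fintype V] [Fintype E] (ends : E → Sym2 V)
    (len h : V → ℕ) (w : E → ℕ) (hw : ∀ e, 0 < w e)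
    (hdvd : ∀ e, ∀ v ∈ ends e, len v ∣ w e)
    (hcond : ∀ (U : Finset V) (T : Finset E),
      (∀ e, ∀ u ∈ ends e, ∀ v ∈ ends e, u ∈ U → v ∈ U) → (∀ e ∈ T, ∃ v ∈ ends e, v ∈ U) →
      ∑ e ∈ T, w e + ∑ v ∈ U, h v ≤ ∑ v ∈ U, len v) :
    ∃ f : E → V, Function.Injective f ∧ ∀ e, GoodFor ends len h w (f e) e := by
  rcases isEmpty_or_nonempty E with hE | hE
  · exact ⟨isEmptyElim, fun e => isEmptyElim e, fun e => isEmptyElim e⟩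
  set G := joinGraph ends Set.univ with hG
  have hcomp : ∀ c : G.ConnectedComponent, ∃ q : V → E, ∀ e,
      (∃ v ∈ ends e, G.connectedComponentMk v = c) →
      ∃ v, G.connectedComponentMk v = c ∧ q v = e ∧ GoodFor ends len h w v e := by
    intro c
    have hcl : ∀ e, ∀ u ∈ ends e, ∀ v ∈ ends e,
        u ∈ Finset.univ.filter (fun v => G.connectedComponentMk v = c) →
        v ∈ Finset.univ.filter (fun v => G.connectedComponentMk v = c) := by
      intro e u hu v hv huc
      simp only [Finset.mem_filter, Finset.mem_univ, true_and] at huc ⊢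
      by_cases huv : u = v
      · rw [← huv, huc]
      · rw [← huc]
        refine SimpleGraph.ConnectedComponent.sound (SimpleGraph.Adj.reachable ?_)
        exact ⟨fun h => huv h.symm, e, trivial, ((Sym2.mem_and_mem_iff (fun h => huv h.symm)).mp ⟨hv, hu⟩)⟩
    obtain ⟨q, hq⟩ := assign_component ends len h w hw hdvd
      (Finset.univ.filter (fun v => G.connectedComponentMk v = c))
      (by obtain ⟨v, hv⟩ := c.exists_rep; exact ⟨v, Finset.mem_filter.mpr ⟨Finset.mem_univ _, hv⟩⟩) hcl
      (by
        intro u hu v hv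
        simp only [Finset.mem_filter, Finset.mem_univ, true_and] at hu hv
        exact SimpleGraph.ConnectedComponent.exact (hu.trans hv.symm))
      (hcond _ _ hcl fun e he => (Finset.mem_filter.mp he).2)
    exact ⟨q, fun e he => by simpa using hq e (by simpa using he)⟩
  choose q hq using hcomp
  have hall : ∀ e, ∃ v, q (G.connectedComponentMk v) v = e ∧ GoodFor ends len h w v e := by
    intro e
    obtain ⟨v, hv⟩ : ∃ v, v ∈ ends e := ⟨_, Sym2.out_fst_mem (ends e)⟩
    obtain ⟨x, hx, hqx, hg⟩ := hq (G.connectedComponentMk v) e ⟨v, hv, rfl⟩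
    exact ⟨x, by rw [hx, hqx], hg⟩
  choose f hf using hall
  exact ⟨f, fun a b hab => by rw [← (hf a).1, ← (hf b).1, hab], fun e => (hf e).2⟩

/-! ### Cycles and edge orbits -/

/-- The powers of `π` fixing `x` are the multiples of the size of the cycle of `x`. -/
lemma pow_apply_eq_iff_card_dvd {α : Type*} [Fintype α] (π : Equiv.Perm α) (x : α)
    (S : Finset α) (hS : ∀ y, y ∈ S ↔ π.SameCycle x y) (t : ℕ) :
    (π ^ t) x = x ↔ S.card ∣ t := by
  have hper : x ∈ Function.periodicPts π := by
    refine ⟨orderOf π, orderOf_pos π, ?_⟩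
    rw [Function.IsPeriodicPt, Function.IsFixedPt, ← Equiv.Perm.coe_pow, pow_orderOf_eq_one]
    rfl
  have hpos := Function.minimalPeriod_pos_of_mem_periodicPts hper
  have : S = (Finset.range (Function.minimalPeriod π x)).image (fun i => π^[i] x) := by
    ext y
    simp only [hS, Finset.mem_image, Finset.mem_range]
    constructor
    · intro h
      obtain ⟨i, _, hi⟩ := h.exists_pow_eq'
      refine ⟨i % Function.minimalPeriod π x, Nat.mod_lt _ hpos, ?_⟩
      rw [Function.iterate_mod_minimalPeriod_eq, ← Equiv.Perm.coe_pow, hi]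
    · rintro ⟨i, _, rfl⟩
      exact ⟨i, by rw [zpow_natCast, Equiv.Perm.coe_pow]⟩
  rw [this, Finset.card_image_of_injOn, Finset.card_range,
    ← Function.isPeriodicPt_iff_minimalPeriod_dvd, Function.IsPeriodicPt, Function.IsFixedPt,
    ← Equiv.Perm.coe_pow]
  intro a ha b hb hab
  exact Function.iterate_injOn_Iio_minimalPeriod (by simpa using ha) (by simpa using hb) hab

section Orbits
variable {n : ℕ} (σ : Equiv.Perm (Fin n))

lemma edgePerm_pow_val (t : ℕ) (e : Edge n) :
    (((edgePerm σ) ^ t) e).1 = Sym2.map (σ ^ t) e.1 := by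
  induction t with
  | zero => simp
  | succ t ih =>
    rw [pow_succ', Equiv.Perm.mul_apply, pow_succ']
    change Sym2.map σ (((edgePerm σ) ^ t) e).1 = _
    rw [ih, Sym2.map_map]
    rfl

lemma mem_edgeOrbit_iff {e f : Edge n} :
    f ∈ edgeOrbit σ e ↔ ∃ t : ℕ, f.1 = Sym2.map (σ ^ t) e.1 := by
  simp only [edgeOrbit, Finset.mem_filter, Finset.mem_univ, true_and]
  constructor
  · intro h
    obtain ⟨t, _, ht⟩ := h.exists_pow_eq'
    exact ⟨t, by rw [← ht, edgePerm_pow_val]⟩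
  · rintro ⟨t, ht⟩
    refine ⟨t, ?_⟩
    rw [zpow_natCast]
    exact Subtype.ext (by rw [edgePerm_pow_val, ht])

lemma self_mem_edgeOrbit (e : Edge n) : e ∈ edgeOrbit σ e :=
  (mem_edgeOrbit_iff σ).mpr ⟨0, by simp⟩

lemma edgeOrbit_eq {e f : Edge n} (h : f ∈ edgeOrbit σ e) : edgeOrbit σ f = edgeOrbit σ e := by
  simp only [edgeOrbit, Finset.mem_filter, Finset.mem_univ, true_and] at h
  ext g
  simp only [edgeOrbit, Finset.mem_filter, Finset.mem_univ, true_and]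
  exact ⟨fun h' => h.trans h', fun h' => h.symm.trans h'⟩

lemma map_pow_eq_iff (e : Edge n) (t : ℕ) :
    Sym2.map (σ ^ t) e.1 = e.1 ↔ (edgeOrbit σ e).card ∣ t := by
  rw [← pow_apply_eq_iff_card_dvd (edgePerm σ) e _ (by simp [edgeOrbit]), ← edgePerm_pow_val, Subtype.ext_iff]

lemma pow_eq_iff (i : Fin n) (t : ℕ) : (σ ^ t) i = i ↔ nodeOrbitSize σ i ∣ t := by
  rw [nodeOrbitSize, ← pow_apply_eq_iff_card_dvd σ i _ (by simp)]

lemma nodeOrbitSize_pos (i : Fin n) : 0 < nodeOrbitSize σ i :=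
  Finset.card_pos.mpr ⟨i, by simpa using Equiv.Perm.SameCycle.refl σ i⟩

lemma edgeOrbit_card_pos (e : Edge n) : 0 < (edgeOrbit σ e).card :=
  Finset.card_pos.mpr ⟨e, self_mem_edgeOrbit σ e⟩

/-- The set of cycles (node orbits) of `σ`, fixed points included. -/
abbrev Cyc := Quotient (Equiv.Perm.SameCycle.setoid σ)

/-- The cycle of `σ` containing `i`. -/
def cyc (i : Fin n) : Cyc σ := Quotient.mk _ i

lemma cyc_eq_iff {i j : Fin n} : cyc σ i = cyc σ j ↔ σ.SameCycle i j := Quotient.eq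

lemma cyc_pow (t : ℕ) (i : Fin n) : cyc σ ((σ ^ t) i) = cyc σ i := by
  rw [cyc_eq_iff]; simpa using Equiv.Perm.SameCycle.refl σ i

lemma exists_pow_of_cyc_eq {i j : Fin n} (h : cyc σ i = cyc σ j) : ∃ t : ℕ, (σ ^ t) i = j := by
  obtain ⟨t, _, ht⟩ := ((cyc_eq_iff σ).mp h).exists_pow_eq'
  exact ⟨t, ht⟩

/-- The length of a cycle. -/
def cycLen (A : Cyc σ) : ℕ := (Finset.univ.filter fun i => cyc σ i = A).card

lemma cycLen_cyc (i : Fin n) : cycLen σ (cyc σ i) = nodeOrbitSize σ i := by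
  simp only [cycLen, nodeOrbitSize, cyc_eq_iff, Equiv.Perm.sameCycle_comm]

lemma exists_cyc (A : Cyc σ) : ∃ i, cyc σ i = A := Quotient.exists_rep A

lemma cycLen_pos (A : Cyc σ) : 0 < cycLen σ A := by
  obtain ⟨i, rfl⟩ := exists_cyc σ A
  rw [cycLen_cyc]; exact nodeOrbitSize_pos σ i

/-- The edge `e` lies in a half orbit: its orbit has half as many edges as the cycle of one of its ends
has elements. Both ends then lie in that cycle, see `half_data`. -/
def IsHalf (e : Edge n) : Prop := ∃ i ∈ e.1, 2 * (edgeOrbit σ e).card = nodeOrbitSize σ i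

/-- The unordered pair of cycles joined by `e`. -/
def cycEnds (e : Edge n) : Sym2 (Cyc σ) := Sym2.map (cyc σ) e.1

lemma ends_eq {e f : Edge n} (h : f ∈ edgeOrbit σ e) : cycEnds σ f = cycEnds σ e := by
  obtain ⟨t, ht⟩ := (mem_edgeOrbit_iff σ).mp h
  rw [cycEnds, ht, Sym2.map_map, cycEnds]
  congr 1
  funext i
  exact cyc_pow σ t i

lemma mem_ends {e : Edge n} {A : Cyc σ} : A ∈ cycEnds σ e ↔ ∃ i ∈ e.1, cyc σ i = A := by
  simp [cycEnds, Sym2.mem_map]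

lemma isHalf_iff {e : Edge n} : IsHalf σ e ↔ ∃ A ∈ cycEnds σ e, 2 * (edgeOrbit σ e).card = cycLen σ A := by
  constructor
  · rintro ⟨i, hi, h⟩
    exact ⟨cyc σ i, (mem_ends σ).mpr ⟨i, hi, rfl⟩, by rw [cycLen_cyc, h]⟩
  · rintro ⟨A, hA, h⟩
    obtain ⟨i, hi, rfl⟩ := (mem_ends σ).mp hA
    exact ⟨i, hi, by rw [h, cycLen_cyc]⟩

lemma isHalf_congr {e f : Edge n} (h : f ∈ edgeOrbit σ e) : IsHalf σ f ↔ IsHalf σ e := by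
  rw [isHalf_iff, isHalf_iff, ends_eq σ h, edgeOrbit_eq σ h]

/-- If `w` is the size of the orbit of `e = {i, j}`, then `σ ^ w` either fixes `i` or exchanges `i` and
`j`. In the second case the length of the cycle of `i` is `w` or `2 * w`, and `2 * w` is the half
orbit case. -/
lemma dvd_of_not_isHalf {e : Edge n} (he : ¬ IsHalf σ e) {i : Fin n} (hi : i ∈ e.1) :
    nodeOrbitSize σ i ∣ (edgeOrbit σ e).card := by
  obtain ⟨j, hj⟩ := Sym2.mem_iff_exists.mp hi
  have hfix := (map_pow_eq_iff σ e _).mpr (dvd_refl (edgeOrbit σ e).card)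
  set w := (edgeOrbit σ e).card with hw
  rw [hj, Sym2.map_mk, Sym2.eq_iff] at hfix
  rcases hfix with ⟨h1, _⟩ | ⟨h1, h2⟩
  · exact (pow_eq_iff σ i w).mp h1
  · have hm2 : nodeOrbitSize σ i ∣ 2 * w := by
      rw [← pow_eq_iff, two_mul, pow_add, Equiv.Perm.mul_apply, h1, h2]
    have hwm : w ∣ nodeOrbitSize σ i := by
      rw [hw, ← map_pow_eq_iff, hj, Sym2.map_mk]
      have hi' := (pow_eq_iff σ i _).mpr (dvd_refl (nodeOrbitSize σ i))
      have hj' : (σ ^ nodeOrbitSize σ i) j = j := by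
        rw [← h1, ← Equiv.Perm.mul_apply, ← pow_add, add_comm, pow_add, Equiv.Perm.mul_apply, hi']
      rw [hi', hj']
    obtain ⟨c, hc⟩ := hwm
    have hwpos : 0 < w := edgeOrbit_card_pos σ e
    have hc2 : c ∣ 2 := by
      rw [hc, mul_comm 2 w] at hm2
      exact Nat.dvd_of_mul_dvd_mul_left hwpos hm2
    rcases (Nat.dvd_prime Nat.prime_two).mp hc2 with rfl | rfl
    · rw [hc, mul_one]
    · exact absurd ⟨i, hi, by omega⟩ he

lemma card_dvd_of_forall {e : Edge n} {t : ℕ} (h : ∀ i ∈ e.1, nodeOrbitSize σ i ∣ t) :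
    (edgeOrbit σ e).card ∣ t := by
  rw [← map_pow_eq_iff]
  refine (Sym2.map_congr fun i hi => ?_).trans (congrFun Sym2.map_id e.1)
  exact (pow_eq_iff σ i t).mpr (h i hi)

/-- An edge of a half orbit joins opposite elements of a cycle. -/
lemma half_form {e : Edge n} {i : Fin n} (hi : i ∈ e.1)
    (h : 2 * (edgeOrbit σ e).card = nodeOrbitSize σ i) :
    e.1 = s(i, (σ ^ (edgeOrbit σ e).card) i) := by
  obtain ⟨j, hj⟩ := Sym2.mem_iff_exists.mp hi
  have hfix := (map_pow_eq_iff σ e _).mpr (dvd_refl (edgeOrbit σ e).card)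
  have hwpos := edgeOrbit_card_pos σ e
  set w := (edgeOrbit σ e).card with hw
  rw [hj, Sym2.map_mk, Sym2.eq_iff] at hfix
  rcases hfix with ⟨h1, _⟩ | ⟨h1, h2⟩
  · have := Nat.le_of_dvd hwpos ((pow_eq_iff σ i w).mp h1)
    omega
  · rw [hj, h1]

/-- The half orbit inside the cycle `A`; empty if there is none. -/
def halfSet (A : Cyc σ) : Finset (Edge n) :=
  Finset.univ.filter fun e => IsHalf σ e ∧ A ∈ cycEnds σ e

lemma half_data {A : Cyc σ} {e : Edge n} (he : e ∈ halfSet σ A) :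
    2 * (edgeOrbit σ e).card = cycLen σ A ∧ (∀ B ∈ cycEnds σ e, B = A) ∧
    ∃ i, cyc σ i = A ∧ e.1 = s(i, (σ ^ (edgeOrbit σ e).card) i) := by
  simp only [halfSet, Finset.mem_filter, Finset.mem_univ, true_and] at he
  obtain ⟨⟨i, hi, h⟩, hA⟩ := he
  have hform := half_form σ hi h
  have hall : ∀ B ∈ cycEnds σ e, B = cyc σ i := by
    intro B hB
    rw [cycEnds, hform, Sym2.map_mk, cyc_pow] at hB
    simpa using hB
  have hAi := hall A hA
  exact ⟨by rw [hAi, cycLen_cyc, h], fun B hB => (hall B hB).trans hAi.symm, i, hAi.symm, hform⟩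

/-- A cycle contains at most one half orbit. -/
lemma halfSet_eq {A : Cyc σ} {e : Edge n} (he : e ∈ halfSet σ A) :
    halfSet σ A = edgeOrbit σ e := by
  ext f
  constructor
  · intro hf
    obtain ⟨h1, _, i, hi, hei⟩ := half_data σ he
    obtain ⟨h2, _, j, hj, hfj⟩ := half_data σ hf
    have hcard : (edgeOrbit σ f).card = (edgeOrbit σ e).card := by omega
    obtain ⟨t, ht⟩ := exists_pow_of_cyc_eq σ (hi.trans hj.symm)
    refine (mem_edgeOrbit_iff σ).mpr ⟨t, ?_⟩
    rw [hfj, hcard, hei, Sym2.map_mk, ← ht, ← Equiv.Perm.mul_apply, ← Equiv.Perm.mul_apply,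
      ← pow_add, ← pow_add, add_comm]
  · intro hf
    simp only [halfSet, Finset.mem_filter, Finset.mem_univ, true_and] at he ⊢
    rw [isHalf_congr σ hf, ends_eq σ hf]
    exact he

lemma halfSet_card {A : Cyc σ} (h : (halfSet σ A).Nonempty) :
    2 * (halfSet σ A).card = cycLen σ A := by
  obtain ⟨e, he⟩ := h
  rw [halfSet_eq σ he]
  exact (half_data σ he).1

/-! ### Cycle counts -/

lemma card_fiber_len (m : ℕ) :
    (Finset.univ.filter fun i => nodeOrbitSize σ i = m).card =
      m * (Finset.univ.filter fun A : Cyc σ => cycLen σ A = m).card := by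
  rw [Finset.card_eq_sum_card_fiberwise (f := cyc σ)
    (t := Finset.univ.filter fun A : Cyc σ => cycLen σ A = m)]
  · rw [Finset.sum_const_nat (m := m), mul_comm]
    intro A hA
    simp only [Finset.mem_filter, Finset.mem_univ, true_and] at hA
    rw [← hA, cycLen]
    congr 1
    ext i
    simp only [Finset.mem_filter, Finset.mem_univ, true_and, and_iff_right_iff_imp]
    rintro rfl
    rw [← cycLen_cyc]; rfl
  · intro i hi
    simpa [cycLen_cyc] using hi

/-- Agreement of `cycleCount`, defined through `cycleType` and fixed points, with the number of elements
of `Cyc σ` of length `m`. Both counts, multiplied by `m`, give the number of points on `m`-cycles. -/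
lemma cycleCount_eq (m : ℕ) (hm : 1 ≤ m) :
    (Finset.univ.filter fun A : Cyc σ => cycLen σ A = m).card = cycleCount σ m := by
  apply Nat.eq_of_mul_eq_mul_left (show 0 < m by omega)
  rw [← card_fiber_len, cycleCount]
  split_ifs with h1
  · subst h1
    rw [one_mul]
    congr 1
    ext i
    simp only [Finset.mem_filter, Finset.mem_univ, true_and]
    rw [← Nat.dvd_one, ← pow_eq_iff, pow_one]
  · have hsupp : ∀ i, i ∈ (σ.cycleOf i).support → (σ.cycleOf i).support.card = nodeOrbitSize σ i := by
      intro i hi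
      rw [nodeOrbitSize]
      congr 1
      ext j
      rw [Equiv.Perm.mem_support_cycleOf_iff] at hi
      simp only [Finset.mem_filter, Finset.mem_univ, true_and]
      rw [Equiv.Perm.mem_support_cycleOf_iff]
      exact ⟨fun h => h.1, fun h => ⟨h, hi.2⟩⟩
    rw [Equiv.Perm.cycleType_def, Multiset.count_map]
    have : (Multiset.filter (fun a => m = (Finset.card ∘ Equiv.Perm.support) a)
        σ.cycleFactorsFinset.val).card =
        (σ.cycleFactorsFinset.filter fun c => c.support.card = m).card := by
      rw [Finset.card_def, Finset.filter_val]
      congr 1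
      exact Multiset.filter_congr fun c _ => by simp [eq_comm]
    rw [this, Finset.card_eq_sum_card_fiberwise (f := fun i => σ.cycleOf i)
      (t := σ.cycleFactorsFinset.filter fun c => c.support.card = m)]
    · rw [Finset.sum_const_nat (m := m), mul_comm]
      intro c hc
      simp only [Finset.mem_filter] at hc
      rw [← hc.2]
      congr 1
      ext i
      simp only [Finset.mem_filter, Finset.mem_univ, true_and]
      constructor
      · rintro ⟨hi, rfl⟩
        have := hc.1
        rw [Equiv.Perm.cycleOf_mem_cycleFactorsFinset_iff] at this
        rw [Equiv.Perm.mem_support_cycleOf_iff]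
        exact ⟨Equiv.Perm.SameCycle.refl _ _, this⟩
      · intro hi
        have hci := Equiv.Perm.cycle_is_cycleOf hi hc.1
        refine ⟨?_, hci.symm⟩
        rw [← hsupp i (hci ▸ hi), ← hci, hc.2]
    · intro i hi
      simp only [Finset.coe_filter, Finset.mem_univ, true_and, Set.mem_ofPred_eq] at hi ⊢
      have hmem : i ∈ σ.support := by
        rw [Equiv.Perm.mem_support]
        intro h
        have : nodeOrbitSize σ i ∣ 1 := by rw [← pow_eq_iff, pow_one, h]
        have := Nat.dvd_one.mp this
        omega
      refine ⟨Equiv.Perm.cycleOf_mem_cycleFactorsFinset_iff.mpr hmem, ?_⟩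
      rw [hsupp i, hi]
      rw [Equiv.Perm.mem_support_cycleOf_iff]
      exact ⟨Equiv.Perm.SameCycle.refl _ _, hmem⟩

/-- The number of points lying on cycles of length at most `m`. -/
lemma card_le_len (m : ℕ) :
    (Finset.univ.filter fun i => nodeOrbitSize σ i ≤ m).card =
      ∑ l ∈ Finset.Icc 1 m, l * cycleCount σ l := by
  rw [Finset.card_eq_sum_card_fiberwise (f := nodeOrbitSize σ) (t := Finset.Icc 1 m)]
  · refine Finset.sum_congr rfl fun l hl => ?_
    rw [Finset.mem_Icc] at hl
    rw [← cycleCount_eq σ l hl.1, ← card_fiber_len]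
    congr 1
    ext i
    simp only [Finset.mem_filter, Finset.mem_univ, true_and]
    omega
  · intro i hi
    have := nodeOrbitSize_pos σ i
    simp at hi ⊢
    omega

end Orbits

/-! ### Edge bound for unions of components -/

/-- The edge bound of a pseudoforest, extended from components to unions of components. -/
lemma card_edges_le_of_closed {n : ℕ} {H : Finset (Edge n)} (hH : IsPseudoforest H)
    (S : Finset (Fin n)) (hS : ∀ e ∈ H, ∀ u ∈ e.1, ∀ v ∈ e.1, u ∈ S → v ∈ S) :
    (H.filter fun e => ∀ v ∈ e.1, v ∈ S).card ≤ S.card := by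
  have hadj : ∀ e ∈ H, ∀ u ∈ e.1, ∀ v ∈ e.1, u ≠ v → (edgeGraph H).Adj u v := by
    intro e he u hu v hv huv
    rw [edgeGraph, SimpleGraph.fromEdgeSet_adj]
    exact ⟨⟨e, he, (Sym2.mem_and_mem_iff huv).mp ⟨hu, hv⟩⟩, huv⟩
  have hreach : ∀ u v, (edgeGraph H).Reachable u v → u ∈ S → v ∈ S := by
    rintro u v ⟨W⟩
    induction W with
    | nil => exact id
    | cons h _ ih =>
      intro hu
      apply ih
      rw [edgeGraph, SimpleGraph.fromEdgeSet_adj] at h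
      obtain ⟨⟨e, he, hee⟩, _⟩ := h
      exact hS e he _ (by rw [hee]; simp) _ (by rw [hee]; simp) hu
  have hcomp : ∀ e ∈ H, ∀ v ∈ e.1, (edgeGraph H).connectedComponentMk v =
      (edgeGraph H).connectedComponentMk (Quot.out e.1).1 := by
    intro e he v hv
    by_cases h : v = (Quot.out e.1).1
    · rw [← h]
    · exact SimpleGraph.ConnectedComponent.sound
        (hadj e he v hv _ (Sym2.out_fst_mem e.1) h).reachable
  rw [Finset.card_eq_sum_card_fiberwise
      (f := fun e : Edge n => (edgeGraph H).connectedComponentMk (Quot.out e.1).1)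
      (t := Finset.univ) (by intro e _; simp),
    Finset.card_eq_sum_card_fiberwise (s := S)
      (f := fun v => (edgeGraph H).connectedComponentMk v)
      (t := Finset.univ) (by intro e _; simp)]
  refine Finset.sum_le_sum fun c _ => ?_
  by_cases hc : ∃ v ∈ S, (edgeGraph H).connectedComponentMk v = c
  · obtain ⟨v, hvS, hvc⟩ := hc
    refine le_trans (Finset.card_le_card ?_) ((hH c).trans (Finset.card_le_card ?_))
    · intro e he
      simp only [Finset.mem_filter] at he ⊢
      exact ⟨he.1.1, fun u hu => (hcomp e he.1.1 u hu).trans he.2⟩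
    · intro u hu
      simp only [Finset.mem_filter, Finset.mem_univ, true_and] at hu ⊢
      exact ⟨hreach v u (SimpleGraph.ConnectedComponent.exact (hvc.trans hu.symm)) hvS, hu⟩
  · rw [Finset.card_eq_zero.mpr]
    · exact Nat.zero_le _
    · rw [Finset.filter_eq_empty_iff]
      intro e he hec
      simp only [Finset.mem_filter] at he
      exact hc ⟨_, he.2 _ (Sym2.out_fst_mem e.1), hec⟩

/-! ### Pieces attached to a cycle -/

section Code
variable {n : ℕ} (σ : Equiv.Perm (Fin n))

/-- The edge orbit of the pair `{i, j}`, for `i` and `j` not required to be distinct (it is empty when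
`i = j`). -/
def pairOrbit (i j : Fin n) : Finset (Edge n) :=
  Finset.univ.filter fun f => ∃ t : ℕ, f.1 = s((σ ^ t) i, (σ ^ t) j)

/-- An orbit joining `A` and `B` contains an edge at any prescribed `i ∈ A`, hence is determined by the
other end of that edge. -/
lemma exists_pairOrbit {e : Edge n} {A B : Cyc σ} (h : cycEnds σ e = s(A, B)) {i : Fin n}
    (hi : cyc σ i = A) : ∃ j, cyc σ j = B ∧ edgeOrbit σ e = pairOrbit σ i j := by
  obtain ⟨i', hi', hA⟩ := (mem_ends σ (e := e) (A := A)).mp (by rw [h]; simp)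
  obtain ⟨j', hj'⟩ := Sym2.mem_iff_exists.mp hi'
  obtain ⟨t, ht⟩ := exists_pow_of_cyc_eq σ (hA.trans hi.symm)
  have hB : cyc σ j' = B := by
    rw [cycEnds, hj', Sym2.map_mk, hA] at h
    exact Sym2.congr_right.mp h
  refine ⟨(σ ^ t) j', by rw [cyc_pow, hB], ?_⟩
  have he' : ((edgePerm σ ^ t) e).1 = s(i, (σ ^ t) j') := by
    rw [edgePerm_pow_val, hj', Sym2.map_mk, ht]
  have hmem : (edgePerm σ ^ t) e ∈ edgeOrbit σ e :=
    (mem_edgeOrbit_iff σ).mpr ⟨t, edgePerm_pow_val σ t e⟩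
  rw [← edgeOrbit_eq σ hmem]
  ext f
  rw [mem_edgeOrbit_iff, he']
  simp [pairOrbit]

/-- The orbits of size `len A` that join `A` to a cycle no longer than `A`. -/
def downOrbits (A : Cyc σ) : Finset (Finset (Edge n)) :=
  Finset.univ.filter fun O => O.card = cycLen σ A ∧
    ∃ e B, edgeOrbit σ e = O ∧ cycEnds σ e = s(A, B) ∧ cycLen σ B ≤ cycLen σ A

/-- The orbits of size `2 * len A ≤ k` that join `A` to a cycle of length `2 * len A`. -/
def upOrbits (k : ℕ) (A : Cyc σ) : Finset (Finset (Edge n)) :=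
  Finset.univ.filter fun O => (O.card = 2 * cycLen σ A ∧ 2 * cycLen σ A ≤ k) ∧
    ∃ e B, edgeOrbit σ e = O ∧ cycEnds σ e = s(A, B) ∧ cycLen σ B = 2 * cycLen σ A

/-- Fix a point of `A`; the orbit is determined by the other end, a point on a cycle of length at most
`len A`. -/
lemma card_downOrbits_le (A : Cyc σ) :
    (downOrbits σ A).card ≤ ∑ l ∈ Finset.Icc 1 (cycLen σ A), l * cycleCount σ l := by
  rw [← card_le_len]
  obtain ⟨i, hi⟩ := exists_cyc σ A
  refine le_trans (Finset.card_le_card ?_) (Finset.card_image_le (f := pairOrbit σ i))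
  intro O hO
  simp only [downOrbits, Finset.mem_filter, Finset.mem_univ, true_and] at hO
  obtain ⟨_, e, B, rfl, hends, hle⟩ := hO
  obtain ⟨j, hj, hO⟩ := exists_pairOrbit σ hends hi
  refine Finset.mem_image.mpr ⟨j, ?_, hO.symm⟩
  simpa [← cycLen_cyc, hj] using hle

/-- Fix a point on each cycle of length `2 * len A`; the orbit is determined by that cycle and by a point
of `A`. -/
lemma card_upOrbits_le (k : ℕ) (A : Cyc σ) :
    (upOrbits σ k A).card ≤
      cycLen σ A * cycleCount σ (2 * cycLen σ A) * (if 2 * cycLen σ A ≤ k then 1 else 0) := by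
  split_ifs with hk
  · have hpos := cycLen_pos σ A
    rw [mul_one, ← cycleCount_eq σ _ (by omega)]
    choose rep hrep using exists_cyc σ
    have hprod := Finset.card_product (Finset.univ.filter fun i => cyc σ i = A)
      (Finset.univ.filter fun B : Cyc σ => cycLen σ B = 2 * cycLen σ A)
    change _ = cycLen σ A * _ at hprod
    rw [← hprod]
    refine le_trans (Finset.card_le_card ?_)
      (Finset.card_image_le (f := fun x : Fin n × Cyc σ => pairOrbit σ (rep x.2) x.1))
    intro O hO
    simp only [upOrbits, Finset.mem_filter, Finset.mem_univ, true_and] at hO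
    obtain ⟨_, e, B, rfl, hends, hle⟩ := hO
    obtain ⟨i, hi, hO⟩ := exists_pairOrbit σ (hends.trans Sym2.eq_swap) (hrep B)
    refine Finset.mem_image.mpr ⟨(i, B), ?_, hO.symm⟩
    simp [hi, hle]
  · rw [mul_zero, Nat.le_zero, Finset.card_eq_zero]
    simp only [upOrbits, Finset.filter_eq_empty_iff]
    exact fun O _ h => hk h.1.2

/-- The possible pieces of an orbit pseudoforest assigned to the cycle `A`. A cycle longer than `k` meets
no orbit in `O_k`, so only the empty piece is possible. -/
def choices (k : ℕ) (A : Cyc σ) : Finset (Finset (Edge n)) :=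
  if cycLen σ A ≤ k then
    ({∅} : Finset (Finset (Edge n))) ∪
      ({halfSet σ A} : Finset (Finset (Edge n))).filter (fun X => X.Nonempty) ∪
      downOrbits σ A ∪ (downOrbits σ A).image (fun O => O ∪ halfSet σ A) ∪ upOrbits σ k A
  else {∅}

lemma sum_union_le_real {α : Type*} [DecidableEq α] (S T : Finset α) (g : α → ℝ) (hg : ∀ a, 0 ≤ g a) :
    ∑ a ∈ S ∪ T, g a ≤ ∑ a ∈ S, g a + ∑ a ∈ T, g a := by
  rw [← Finset.sum_union_inter]
  exact le_add_of_nonneg_right (Finset.sum_nonneg fun a _ => hg a)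

/-- The generating function of the pieces of `A` is at most the factor of the product attached to
`len A`. The half orbit contributes `s ^ len A`, which is enlarged by the number of cycles of that
length; adding the half orbit to an orbit only lowers its weight, whence the factor `2`. -/
lemma sum_choices_le {k : ℕ} {A : Cyc σ} (hA : cycLen σ A ≤ k) {s : ℝ} (hs0 : 0 ≤ s)
    (hs1 : s ≤ 1) :
    ∑ X ∈ choices σ k A, s ^ (2 * X.card) ≤
      1 + s ^ cycLen σ A * (cycleCount σ (cycLen σ A) : ℝ) * (if Even (cycLen σ A) then 1 else 0)
        + 2 * s ^ (2 * cycLen σ A) *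
          (∑ l ∈ Finset.Icc 1 (cycLen σ A), (l : ℝ) * (cycleCount σ l : ℝ))
        + s ^ (4 * cycLen σ A) * (cycLen σ A : ℝ) * (cycleCount σ (2 * cycLen σ A) : ℝ) *
          (if 2 * cycLen σ A ≤ k then 1 else 0) := by
  have hg : ∀ X : Finset (Edge n), 0 ≤ s ^ (2 * X.card) := fun X => by positivity
  have hdown : ((downOrbits σ A).card : ℝ) ≤
      ∑ l ∈ Finset.Icc 1 (cycLen σ A), (l : ℝ) * (cycleCount σ l : ℝ) := by
    exact_mod_cast card_downOrbits_le σ A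
  have hup : ((upOrbits σ k A).card : ℝ) ≤ (cycLen σ A : ℝ) *
      (cycleCount σ (2 * cycLen σ A) : ℝ) * (if 2 * cycLen σ A ≤ k then 1 else 0) := by
    have := card_upOrbits_le σ k A
    split_ifs at this ⊢ <;> exact_mod_cast this
  have hone : 1 ≤ cycleCount σ (cycLen σ A) := by
    rw [← cycleCount_eq σ _ (cycLen_pos σ A)]
    exact Finset.card_pos.mpr ⟨A, by simp⟩
  have h1 : ∑ X ∈ ({halfSet σ A} : Finset (Finset (Edge n))).filter (fun X => X.Nonempty),
      s ^ (2 * X.card) ≤ s ^ cycLen σ A * (cycleCount σ (cycLen σ A) : ℝ) *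
        (if Even (cycLen σ A) then 1 else 0) := by
    rw [Finset.filter_singleton]
    split_ifs with h1 h2 h2
    · rw [Finset.sum_singleton, halfSet_card σ h1, mul_one]
      exact le_mul_of_one_le_right (by positivity) (by exact_mod_cast hone)
    · exact absurd ⟨_, (halfSet_card σ h1).symm.trans (two_mul _)⟩ h2
    · rw [Finset.sum_empty]; positivity
    · simp
  have h2 : ∑ X ∈ downOrbits σ A, s ^ (2 * X.card) ≤ s ^ (2 * cycLen σ A) *
      (∑ l ∈ Finset.Icc 1 (cycLen σ A), (l : ℝ) * (cycleCount σ l : ℝ)) := by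
    rw [Finset.sum_congr rfl (g := fun _ => s ^ (2 * cycLen σ A)), Finset.sum_const, nsmul_eq_mul,
      mul_comm]
    · exact mul_le_mul_of_nonneg_left hdown (by positivity)
    · intro X hX
      simp only [downOrbits, Finset.mem_filter] at hX
      rw [hX.2.1]
  have h3 : ∑ X ∈ (downOrbits σ A).image (fun O => O ∪ halfSet σ A), s ^ (2 * X.card) ≤
      ∑ X ∈ downOrbits σ A, s ^ (2 * X.card) := by
    refine (Finset.sum_image_le_of_nonneg (fun X _ => hg X)).trans
      (Finset.sum_le_sum fun X _ => ?_)
    exact pow_le_pow_of_le_one hs0 hs1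
      (Nat.mul_le_mul_left 2 (Finset.card_le_card Finset.subset_union_left))
  have h4 : ∑ X ∈ upOrbits σ k A, s ^ (2 * X.card) ≤ s ^ (4 * cycLen σ A) * ((cycLen σ A : ℝ) *
      (cycleCount σ (2 * cycLen σ A) : ℝ) * (if 2 * cycLen σ A ≤ k then 1 else 0)) := by
    rw [Finset.sum_congr rfl (g := fun _ => s ^ (4 * cycLen σ A)), Finset.sum_const, nsmul_eq_mul,
      mul_comm]
    · exact mul_le_mul_of_nonneg_left hup (by positivity)
    · intro X hX
      simp only [upOrbits, Finset.mem_filter] at hX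
      rw [hX.2.1.1, ← mul_assoc, show 2 * 2 = 4 from rfl]
  rw [choices, if_pos hA]
  have u1 := sum_union_le_real (({∅} : Finset (Finset (Edge n))) ∪
      ({halfSet σ A} : Finset (Finset (Edge n))).filter (fun X => X.Nonempty) ∪
      downOrbits σ A ∪ (downOrbits σ A).image (fun O => O ∪ halfSet σ A)) (upOrbits σ k A) _ hg
  have u2 := sum_union_le_real (({∅} : Finset (Finset (Edge n))) ∪
      ({halfSet σ A} : Finset (Finset (Edge n))).filter (fun X => X.Nonempty) ∪
      downOrbits σ A) ((downOrbits σ A).image (fun O => O ∪ halfSet σ A)) _ hg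
  have u3 := sum_union_le_real (({∅} : Finset (Finset (Edge n))) ∪
      ({halfSet σ A} : Finset (Finset (Edge n))).filter (fun X => X.Nonempty))
      (downOrbits σ A) _ hg
  have u4 := sum_union_le_real ({∅} : Finset (Finset (Edge n)))
      (({halfSet σ A} : Finset (Finset (Edge n))).filter (fun X => X.Nonempty)) _ hg
  have u5 : ∑ X ∈ ({∅} : Finset (Finset (Edge n))), s ^ (2 * X.card) = 1 := by simp
  nlinarith only [u1, u2, u3, u4, u5, h1, h2, h3, h4]

/-! ### Decomposition of an orbit pseudoforest -/

/-- The orbits contained in `H` that are not half orbits (for `H` a union of orbits). -/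
def fullOrbits (H : Finset (Edge n)) : Finset (Finset (Edge n)) :=
  (H.filter fun e => ¬ IsHalf σ e).image (edgeOrbit σ)

/-- An orbit pseudoforest is the disjoint union of pieces chosen from `choices`, one per cycle. -/
lemma exists_code {k : ℕ} {H : Finset (Edge n)} (hH : H ∈ orbitPseudoforests σ k) :
    ∃ φ : Cyc σ → Finset (Edge n), (∀ A, φ A ∈ choices σ k A) ∧ Finset.univ.biUnion φ = H ∧
      H.card = ∑ A, (φ A).card := by
  simp only [orbitPseudoforests, Finset.mem_filter, Finset.mem_univ, true_and] at hH
  obtain ⟨hO, hps⟩ := hH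
  have hchoose : ∀ O : fullOrbits σ H,
      ∃ e, e ∈ H ∧ ¬ IsHalf σ e ∧ edgeOrbit σ e = O.1 := by
    rintro ⟨O, hO⟩
    obtain ⟨e, he, rfl⟩ := Finset.mem_image.mp hO
    exact ⟨e, (Finset.mem_filter.mp he).1, (Finset.mem_filter.mp he).2, rfl⟩
  choose rep hrepH hrepn hrepO using hchoose
  have hmemH : ∀ O : fullOrbits σ H, ∀ e ∈ O.1, e ∈ H := fun O e he =>
    (hO _ (hrepH O)).1 (by rw [hrepO]; exact he)
  have hmemn : ∀ O : fullOrbits σ H, ∀ e ∈ O.1, ¬ IsHalf σ e := fun O e he => by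
    rw [isHalf_congr σ (e := rep O) (by rw [hrepO]; exact he)]
    exact hrepn O
  have hmemE : ∀ O : fullOrbits σ H, ∀ e ∈ O.1, cycEnds σ e = cycEnds σ (rep O) := fun O e he =>
    ends_eq σ (by rw [hrepO]; exact he)
  have hmemO : ∀ O : fullOrbits σ H, ∀ e ∈ O.1, edgeOrbit σ e = O.1 := fun O e he => by
    rw [edgeOrbit_eq σ (e := rep O) (by rw [hrepO]; exact he), hrepO]
  have hhalf : ∀ A, H ∩ halfSet σ A = ∅ ∨
      (H ∩ halfSet σ A = halfSet σ A ∧ (halfSet σ A).Nonempty) := by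
    intro A
    rcases Finset.eq_empty_or_nonempty (H ∩ halfSet σ A) with h | ⟨e, he⟩
    · exact Or.inl h
    · obtain ⟨he1, he2⟩ := Finset.mem_inter.mp he
      refine Or.inr ⟨Finset.inter_eq_right.mpr ?_, e, he2⟩
      rw [halfSet_eq σ he2]
      exact (hO e he1).1
  obtain ⟨f, hfinj, hf⟩ := exists_assignment (fun O => cycEnds σ (rep O)) (cycLen σ)
    (fun A => (H ∩ halfSet σ A).card)
    (fun O : fullOrbits σ H => O.1.card)
    (fun O => by rw [← hrepO]; exact edgeOrbit_card_pos σ _)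
    (by
      intro O A hA
      obtain ⟨i, hi, rfl⟩ := (mem_ends σ).mp hA
      rw [cycLen_cyc, ← hrepO]
      exact dvd_of_not_isHalf σ (hrepn O) hi)
    (by
      intro U T hU hT
      have hclosed : ∀ e ∈ H, ∀ A ∈ cycEnds σ e, ∀ B ∈ cycEnds σ e, A ∈ U → B ∈ U := by
        intro e he A hA B hB hAU
        by_cases hh : IsHalf σ e
        · have := (half_data σ (A := A) (e := e) (by simp [halfSet, hh, hA])).2.1 B hB
          rwa [this]
        · have hmem : edgeOrbit σ e ∈ fullOrbits σ H :=
            Finset.mem_image_of_mem _ (Finset.mem_filter.mpr ⟨he, hh⟩)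
          have hE := hmemE ⟨_, hmem⟩ e (self_mem_edgeOrbit σ e)
          exact hU ⟨_, hmem⟩ A (hE ▸ hA) B (hE ▸ hB) hAU
      have hle := card_edges_le_of_closed hps (Finset.univ.filter fun v => cyc σ v ∈ U) (by
        intro e he u hu v hv huU
        simp only [Finset.mem_filter, Finset.mem_univ, true_and] at huU ⊢
        exact hclosed e he _ ((mem_ends σ).mpr ⟨u, hu, rfl⟩) _
          ((mem_ends σ).mpr ⟨v, hv, rfl⟩) huU)
      have hcard : (Finset.univ.filter fun v => cyc σ v ∈ U).card = ∑ A ∈ U, cycLen σ A := by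
        rw [Finset.card_eq_sum_card_fiberwise (f := cyc σ) (t := U)
          (by intro v hv; simpa using hv)]
        refine Finset.sum_congr rfl fun A hA => ?_
        rw [cycLen]
        congr 1
        ext v
        simp only [Finset.mem_filter, Finset.mem_univ, true_and, and_iff_right_iff_imp]
        rintro rfl
        exact hA
      rw [← hcard]
      refine le_trans ?_ hle
      rw [← Finset.card_biUnion, ← Finset.card_biUnion, ← Finset.card_union_of_disjoint]
      · refine Finset.card_le_card fun e he => ?_
        have hin : e ∈ H ∧ ∃ A ∈ cycEnds σ e, A ∈ U := by
          rcases Finset.mem_union.mp he with he | he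
          · obtain ⟨O, hOU, heO⟩ := Finset.mem_biUnion.mp he
            obtain ⟨A, hA, hAU⟩ := hT O hOU
            exact ⟨hmemH O e heO, A, by rw [hmemE O e heO]; exact hA, hAU⟩
          · obtain ⟨A, hAU, heA⟩ := Finset.mem_biUnion.mp he
            obtain ⟨heH, heA⟩ := Finset.mem_inter.mp heA
            exact ⟨heH, A, (Finset.mem_filter.mp heA).2.2, hAU⟩
        obtain ⟨heH, A, hA, hAU⟩ := hin
        refine Finset.mem_filter.mpr ⟨heH, fun v hv => ?_⟩
        simpa using hclosed e heH A hA _ ((mem_ends σ).mpr ⟨v, hv, rfl⟩) hAU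
      · rw [Finset.disjoint_left]
        intro e he he'
        obtain ⟨O, _, heO⟩ := Finset.mem_biUnion.mp he
        obtain ⟨A, _, heA⟩ := Finset.mem_biUnion.mp he'
        exact hmemn O e heO (Finset.mem_filter.mp (Finset.mem_inter.mp heA).2).2.1
      · intro A _ B _ hAB
        rw [Function.onFun, Finset.disjoint_left]
        intro e he he'
        have h1 := (half_data σ (Finset.mem_inter.mp he).2).2.1
        exact hAB (h1 B (Finset.mem_filter.mp (Finset.mem_inter.mp he').2).2.2).symm
      · intro O _ O' _ hOO
        rw [Function.onFun, Finset.disjoint_left]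
        intro e he he'
        exact hOO (Subtype.ext ((hmemO O e he).symm.trans (hmemO O' e he'))))
  -- The piece of `A`: the half orbit of `A`, if present, and the orbit assigned to `A`, if any.
  have hphi : ∀ A, ∀ e ∈ H.filter (fun e => e ∈ halfSet σ A ∨ ∃ O : fullOrbits σ H, e ∈ O.1 ∧ f O = A),
      A ∈ cycEnds σ e := by
    intro A e he
    rcases (Finset.mem_filter.mp he).2 with h | ⟨O, heO, rfl⟩
    · exact (Finset.mem_filter.mp h).2.2
    · rw [hmemE O e heO]; exact (hf O).1
  have hunion : Finset.univ.biUnion (fun A => H.filter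
      (fun e => e ∈ halfSet σ A ∨ ∃ O : fullOrbits σ H, e ∈ O.1 ∧ f O = A)) = H := by
    ext e
    simp only [Finset.mem_biUnion, Finset.mem_univ, true_and, Finset.mem_filter]
    constructor
    · rintro ⟨A, he, _⟩
      exact he
    · intro he
      by_cases hh : IsHalf σ e
      · obtain ⟨A, hA, _⟩ := (isHalf_iff σ).mp hh
        exact ⟨A, he, Or.inl (by simp [halfSet, hh, hA])⟩
      · have hmem : edgeOrbit σ e ∈ fullOrbits σ H :=
          Finset.mem_image_of_mem _ (Finset.mem_filter.mpr ⟨he, hh⟩)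
        exact ⟨f ⟨_, hmem⟩, he, Or.inr ⟨⟨_, hmem⟩, self_mem_edgeOrbit σ e, rfl⟩⟩
  refine ⟨fun A => H.filter (fun e => e ∈ halfSet σ A ∨ ∃ O : fullOrbits σ H, e ∈ O.1 ∧ f O = A), ?_, ?_, ?_⟩
  · intro A
    by_cases hAk : cycLen σ A ≤ k
    · rw [choices, if_pos hAk]
      by_cases hex : ∃ O, f O = A
      · obtain ⟨O, rfl⟩ := hex
        have hsplit : H.filter (fun e => e ∈ halfSet σ (f O) ∨ ∃ O' : fullOrbits σ H, e ∈ O'.1 ∧ f O' = f O) =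
            O.1 ∪ (H ∩ halfSet σ (f O)) := by
          ext e
          simp only [Finset.mem_filter, Finset.mem_union, Finset.mem_inter]
          constructor
          · rintro ⟨he, h | ⟨O', heO, hff⟩⟩
            · exact Or.inr ⟨he, h⟩
            · exact Or.inl (hfinj hff ▸ heO)
          · rintro (h | ⟨he, h⟩)
            · exact ⟨hmemH O e h, Or.inr ⟨O, h, rfl⟩⟩
            · exact ⟨he, Or.inl h⟩
        beta_reduce
        rw [hsplit]
        obtain ⟨hfe, hfO⟩ := hf O
        beta_reduce at hfe hfO
        obtain ⟨B, hB⟩ := Sym2.mem_iff_exists.mp hfe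
        have hBdvd : cycLen σ B ∣ O.1.card := by
          obtain ⟨i, hi, rfl⟩ := (mem_ends σ (e := rep O) (A := B)).mp (by rw [hB]; simp)
          rw [cycLen_cyc, ← hrepO]
          exact dvd_of_not_isHalf σ (hrepn O) hi
        rcases hfO with hfO | ⟨hfO, hh0, hmin⟩
        · have hdown : O.1 ∈ downOrbits σ (f O) := by
            simp only [downOrbits, Finset.mem_filter, Finset.mem_univ, true_and]
            refine ⟨hfO, rep O, B, hrepO O, hB, ?_⟩
            rw [hfO] at hBdvd
            exact Nat.le_of_dvd (cycLen_pos σ _) hBdvd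
          rcases hhalf (f O) with h | ⟨h, _⟩
          · rw [h, Finset.union_empty]
            simp [hdown]
          · rw [h]
            refine Finset.mem_union_left _ (Finset.mem_union_right _ ?_)
            exact Finset.mem_image_of_mem (fun O => O ∪ halfSet σ (f _)) hdown
        · rw [Finset.card_eq_zero.mp hh0, Finset.union_empty]
          refine Finset.mem_union_right _ ?_
          simp only [upOrbits, Finset.mem_filter, Finset.mem_univ, true_and]
          refine ⟨⟨hfO, ?_⟩, rep O, B, hrepO O, hB, ?_⟩
          · rw [← hfO, ← hrepO]
            exact (hO _ (hrepH O)).2.2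
          · -- With `m = len (f O)`: `len B` divides `2 * m` and is at least `m`. It is not `m`, since an
            -- orbit joining two cycles of length `m` has size dividing `m`.
            have hBm := hmin B (by simp only [hB]; simp)
            have hpos := cycLen_pos σ (f O)
            rw [hfO] at hBdvd
            by_contra hne
            have hBeq : cycLen σ B = cycLen σ (f O) := by
              obtain ⟨t, ht⟩ := hBdvd
              rcases t with _ | _ | t
              · omega
              · omega
              · nlinarith
            have : O.1.card ∣ cycLen σ (f O) := by
              rw [← hrepO O]
              refine card_dvd_of_forall σ fun i hi => ?_
              have hci : cyc σ i ∈ cycEnds σ (rep O) := (mem_ends σ).mpr ⟨i, hi, rfl⟩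
              rw [hB, Sym2.mem_iff] at hci
              rw [← cycLen_cyc]
              rcases hci with h | h
              · rw [h]
              · rw [h, hBeq]
            have := Nat.le_of_dvd hpos this
            omega
      · have hsplit : H.filter (fun e => e ∈ halfSet σ A ∨ ∃ O' : fullOrbits σ H, e ∈ O'.1 ∧ f O' = A) =
            H ∩ halfSet σ A := by
          ext e
          simp only [Finset.mem_filter, Finset.mem_inter]
          constructor
          · rintro ⟨he, h | ⟨O', heO, hff⟩⟩
            · exact ⟨he, h⟩
            · exact absurd ⟨O', hff⟩ hex
          · rintro ⟨he, h⟩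
            exact ⟨he, Or.inl h⟩
        beta_reduce
        rw [hsplit]
        rcases hhalf A with h | ⟨h, hne⟩
        · rw [h]; simp
        · rw [h]; simp [hne]
    · rw [choices, if_neg hAk, Finset.mem_singleton, Finset.eq_empty_iff_forall_notMem]
      intro e he
      obtain ⟨i, hi, rfl⟩ := (mem_ends σ).mp (hphi A e he)
      rw [cycLen_cyc] at hAk
      exact hAk ((hO e (Finset.mem_filter.mp he).1).2.1 i hi)
  · exact hunion
  · refine (congrArg Finset.card hunion).symm.trans (Finset.card_biUnion ?_)
    intro A _ B _ hAB
    rw [Function.onFun, Finset.disjoint_left]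
    intro e he he'
    rcases (Finset.mem_filter.mp he).2 with h | ⟨O, heO, hfA⟩
    · exact hAB ((half_data σ h).2.1 B (hphi B e he')).symm
    · rcases (Finset.mem_filter.mp he').2 with h | ⟨O', heO', hfB⟩
      · exact hmemn O e heO (Finset.mem_filter.mp h).2.1
      · have : O = O' := Subtype.ext ((hmemO O e heO).symm.trans (hmemO O' e heO'))
        exact hAB (by rw [← hfA, ← hfB, this])

end Code

/-! ### The generating function -/

/-- Theorem 4 of the paper: generating function of orbit pseudoforests. For
every `n ≥ 2`, `k ≥ 1`, permutation `σ` of `[n]` with `n_m` cycles of length `m`, and `s ∈ [0,1]`,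
`∑_{H ∈ H_k(σ)} s^{2e(H)} ≤ ∏_{m=1}^k (1 + s^m n_m 1{m even} + 2 s^{2m} ∑_{ℓ=1}^m ℓ n_ℓ
  + s^{4m} m n_{2m} 1{2m ≤ k})^{n_m}`. -/
theorem stmt13 (n : ℕ) (hn : 2 ≤ n) (k : ℕ) (hk : 1 ≤ k) (σ : Equiv.Perm (Fin n))
    (s : ℝ) (hs : s ∈ Set.Icc (0 : ℝ) 1) :
    (∑ H ∈ orbitPseudoforests σ k, s ^ (2 * H.card)) ≤
      ∏ m ∈ Finset.Icc 1 k,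
        (1 + s ^ m * (cycleCount σ m : ℝ) * (if Even m then 1 else 0)
          + 2 * s ^ (2 * m) * (∑ ℓ ∈ Finset.Icc 1 m, (ℓ : ℝ) * (cycleCount σ ℓ : ℝ))
          + s ^ (4 * m) * (m : ℝ) * (cycleCount σ (2 * m) : ℝ) * (if 2 * m ≤ k then 1 else 0))
        ^ (cycleCount σ m) := by
  obtain ⟨hs0, hs1⟩ := hs
  have hcode : ∀ H : Finset (Edge n), ∃ φ : Cyc σ → Finset (Edge n), H ∈ orbitPseudoforests σ k →
      (∀ A, φ A ∈ choices σ k A) ∧ Finset.univ.biUnion φ = H ∧ H.card = ∑ A, (φ A).card := by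
    intro H
    by_cases hH : H ∈ orbitPseudoforests σ k
    · obtain ⟨φ, hφ⟩ := exists_code σ hH
      exact ⟨φ, fun _ => hφ⟩
    · exact ⟨fun _ => ∅, fun h => absurd h hH⟩
  choose φ hφ using hcode
  have hinj : Set.InjOn φ (orbitPseudoforests σ k) := by
    intro H hH H' hH' h
    rw [← (hφ H hH).2.1, ← (hφ H' hH').2.1, h]
  set b : ℕ → ℝ := fun m => 1 + s ^ m * (cycleCount σ m : ℝ) * (if Even m then 1 else 0)
          + 2 * s ^ (2 * m) * (∑ ℓ ∈ Finset.Icc 1 m, (ℓ : ℝ) * (cycleCount σ ℓ : ℝ))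
          + s ^ (4 * m) * (m : ℝ) * (cycleCount σ (2 * m) : ℝ) * (if 2 * m ≤ k then 1 else 0)
    with hb
  calc ∑ H ∈ orbitPseudoforests σ k, s ^ (2 * H.card)
      = ∑ H ∈ orbitPseudoforests σ k, ∏ A, s ^ (2 * (φ H A).card) := by
        refine Finset.sum_congr rfl fun H hH => ?_
        rw [Finset.prod_pow_eq_pow_sum, ← Finset.mul_sum, ← (hφ H hH).2.2]
    _ = ∑ ψ ∈ (orbitPseudoforests σ k).image φ, ∏ A, s ^ (2 * (ψ A).card) := by
        rw [Finset.sum_image hinj]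
    _ ≤ ∑ ψ ∈ Fintype.piFinset (choices σ k), ∏ A, s ^ (2 * (ψ A).card) := by
        refine Finset.sum_le_sum_of_subset_of_nonneg ?_ fun ψ _ _ =>
          Finset.prod_nonneg fun A _ => by positivity
        intro ψ hψ
        obtain ⟨H, hH, rfl⟩ := Finset.mem_image.mp hψ
        exact Fintype.mem_piFinset.mpr (hφ H hH).1
    _ = ∏ A, ∑ X ∈ choices σ k A, s ^ (2 * X.card) := by
        rw [Finset.prod_univ_sum]
    _ ≤ ∏ A, (if cycLen σ A ≤ k then b (cycLen σ A) else 1) := by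
        refine Finset.prod_le_prod (fun A _ => Finset.sum_nonneg fun X _ => by positivity)
          fun A _ => ?_
        split_ifs with h
        · exact sum_choices_le σ h hs0 hs1
        · rw [choices, if_neg h]; simp
    _ = ∏ A with cycLen σ A ≤ k, b (cycLen σ A) := by
        rw [Finset.prod_filter]
    _ = ∏ m ∈ Finset.Icc 1 k, b m ^ cycleCount σ m := by
        rw [← Finset.prod_fiberwise_of_maps_to (t := Finset.Icc 1 k) (g := cycLen σ)]
        · refine Finset.prod_congr rfl fun m hm => ?_
          rw [Finset.mem_Icc] at hm
          rw [Finset.prod_congr rfl (g := fun _ => b m), Finset.prod_const,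
            ← cycleCount_eq σ m hm.1]
          · congr 2
            ext A
            simp only [Finset.mem_filter, Finset.mem_univ, true_and]
            omega
          · intro A hA
            rw [(Finset.mem_filter.mp hA).2]
        · intro A hA
          exact Finset.mem_Icc.mpr ⟨cycLen_pos σ A, (Finset.mem_filter.mp hA).2⟩

end
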